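/- Sharpness of the termination bound: For the group G_0 = S_4^2 × S_3^2, the second iterate LatAut(LatAut(G_0)) is isomorphic as a group to S_3 = Equiv.Perm (Fin 3) (in particular it is nontrivial), while the third iterate LatAut(LatAut(LatAut(G_0))) is trivial; hence the LatAut tower of G_0 terminates in exactly three steps. -/

import Mathlib

/-!
The lattice automorphism group of `G₀ = S₄² × S₃²` is a Klein four-group, generated by the swap of
the two `S₄` factors and the swap of the two `S₃` factors. The normal subgroups of a Klein four-group
are the trivial group, the whole group and the three subgroups of order two, which can be permuted
arbitrarily; so the second iterate is `S₃`. The normal subgroups of `S₃` form a chain, so the third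
iterate is trivial.

The substance is the first step. Grade a permutation by the smallest member of the chain
`1 ≤ V₄ ≤ A₄ ≤ S₄` (or `1 ≤ A₃ ≤ S₃`) that contains it: this is `lev`, with values in `{0, 1, 2, 3}`.
If a normal subgroup `N` of `G₀` contains `g`, then taking commutators with elements of a single
factor shows that `N` contains every element of that factor of level at most `min (lev (g p)) 2`.
Hence (`mem_of_levelSub_of_diagSub`) every normal subgroup is a join of subgroups of two kinds:
`levelSub p k`, the elements of level at most `k` of factor `p`, and `diagSub J`, the elements
supported on `J` all of whose coordinates in `J` have the same sign. A subgroup with a largest normal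
subgroup strictly below it (`HasLowerCover`) must be one of these, and `diagSub J` has this property
for `J` nonempty.

A lattice automorphism permutes the four minimal normal subgroups `minSub p`. It cannot send an `S₄`
factor to an `S₃` factor, because the former contains a longer chain of normal subgroups
(`fst_eq_of_map_minSub`). If it fixes every `minSub p`, it preserves supports; it then fixes
`diagSub J` with `|J| ≥ 2`, the only subgroup with a lower cover and support `J`; it fixes a full
factor, the largest normal subgroup with that support; and hence it fixes the unique maximal normal
subgroup of each factor. So it fixes all the generating subgroups and is the identity (`le_apply`).
-/

/-- The lattice of normal subgroups of `G`, ordered by inclusion. -/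
abbrev NormalSubgroupLattice (G : Type*) [Group G] := {N : Subgroup G // N.Normal}

/-- The group of lattice automorphisms of the normal subgroup lattice of `G`. -/
abbrev LatAut (G : Type*) [Group G] :=
  NormalSubgroupLattice G ≃o NormalSubgroupLattice G

namespace LatAutTower

open Equiv

/-! ### Functoriality of the normal subgroup lattice -/

section Functoriality

variable {G H : Type*} [Group G] [Group H]

/-- The isomorphism of normal subgroup lattices induced by a group isomorphism. The image of `N`
under `e` is encoded as its preimage under `e.symm`. -/
def latIso (e : G ≃* H) : NormalSubgroupLattice G ≃o NormalSubgroupLattice H where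
  toFun N := ⟨N.1.comap e.symm.toMonoidHom, N.2.comap _⟩
  invFun N := ⟨N.1.comap e.toMonoidHom, N.2.comap _⟩
  left_inv N := by ext x; simp
  right_inv N := by ext x; simp
  map_rel_iff' {N M} := by
    constructor
    · intro h x hx
      have := @h (e x) (by simpa using hx)
      simpa using this
    · intro h x hx
      exact h hx

lemma mem_latIso (e : G ≃* H) (N : NormalSubgroupLattice G) (y : H) :
    y ∈ (latIso e N).1 ↔ e.symm y ∈ N.1 := Iff.rfl

/-- The action of the automorphism group of `G` on its lattice of normal subgroups. -/
def latHom (G : Type*) [Group G] : MulAut G →* LatAut G where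
  toFun e := latIso e
  map_one' := rfl
  map_mul' _ _ := rfl

lemma mem_latHom (e : MulAut G) (N : NormalSubgroupLattice G) (y : G) :
    y ∈ (latHom G e N).1 ↔ e.symm y ∈ N.1 := Iff.rfl

/-- `LatAut` is an isomorphism invariant. -/
def latCongr (e : G ≃* H) : LatAut G ≃* LatAut H where
  toFun φ := ((latIso e).symm.trans φ).trans (latIso e)
  invFun φ := ((latIso e).trans φ).trans (latIso e).symm
  left_inv φ := by ext1; funext N; simp
  right_inv φ := by ext1; funext N; simp
  map_mul' φ ψ := by ext1; funext N; simp

end Functoriality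

/-! ### Levels of permutations -/

/-- The symmetric group `S₄` (for `true`) or `S₃` (for `false`). -/
abbrev Fac (b : Bool) := Perm (Fin (cond b 4 3))

/-- The index of the smallest term of `1 ≤ V₄ ≤ A₄ ≤ S₄` containing `g`. For `S₃` the value `1` does
not occur, and the terms with indices `0`, `2`, `3` are `1`, `A₃`, `S₃`. -/
def lev {n : ℕ} (g : Perm (Fin n)) : ℕ :=
  if g = 1 then 0 else if Perm.sign g = -1 then 3 else if g * g = 1 then 1 else 2

/-- The level of the elements of the minimal normal subgroup, `V₄` or `A₃`, other than `1`. -/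
def minLev (b : Bool) : ℕ := cond b 1 2

lemma minLev_le_two (b : Bool) : minLev b ≤ 2 := by cases b <;> decide

lemma lev_one {n : ℕ} : lev (1 : Perm (Fin n)) = 0 := by simp [lev]

lemma lev_eq_zero {n : ℕ} {g : Perm (Fin n)} : lev g = 0 ↔ g = 1 := by
  unfold lev; split_ifs <;> simp_all

lemma lev_le_two {n : ℕ} {g : Perm (Fin n)} : lev g ≤ 2 ↔ Perm.sign g = 1 := by
  unfold lev
  split_ifs with h1 h2 h3
  · simp [h1]
  · simp [h2]
  · simpa using (Int.units_eq_one_or _).resolve_right h2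
  · simpa using (Int.units_eq_one_or _).resolve_right h2

lemma lev_inv {n : ℕ} (g : Perm (Fin n)) : lev g⁻¹ = lev g := by
  have : g⁻¹ * g⁻¹ = 1 ↔ g * g = 1 := by rw [← mul_inv_rev, inv_eq_one]
  simp [lev, this]

lemma lev_conj {n : ℕ} (x g : Perm (Fin n)) : lev (x * g * x⁻¹) = lev g := by
  have h1 : x * g * x⁻¹ = 1 ↔ g = 1 := conj_eq_one_iff
  have h2 : x * g * x⁻¹ * (x * g * x⁻¹) = 1 ↔ g * g = 1 := by
    rw [← conj_eq_one_iff (a := x) (b := g * g)]; simp [mul_assoc]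
  have h3 : Perm.sign (x * g * x⁻¹) = Perm.sign g := by
    rw [map_mul, map_mul, map_inv, mul_right_comm, mul_inv_cancel, one_mul]
  simp only [lev, h1, h2, h3]

set_option maxRecDepth 10000 in
lemma lev_mul (b : Bool) : ∀ g h : Fac b, lev (g * h) ≤ max (lev g) (lev h) := by
  cases b <;> decide +kernel

lemma exists_lev (b : Bool) : ∃ g : Fac b, lev g = minLev b := by
  cases b <;> decide +kernel

lemma exists_lev_two (b : Bool) : ∃ g : Fac b, lev g = 2 := by
  cases b <;> decide +kernel

lemma exists_sign (b : Bool) : ∃ g : Fac b, Perm.sign g = -1 := by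
  cases b <;> decide +kernel

lemma minLev_le_lev (b : Bool) : ∀ g : Fac b, g ≠ 1 → minLev b ≤ lev g := by
  cases b <;> decide +kernel

lemma lev_ne_one : ∀ g : Fac false, lev g ≠ 1 := by decide +kernel

lemma exists_commutator (b : Bool) : ∀ g y : Fac b, lev y ≤ lev g → lev y ≤ 2 →
    ∃ x, lev (g * x * g⁻¹ * x⁻¹) = lev y := by
  cases b <;> decide +kernel

lemma exists_conj (b : Bool) : ∀ g y : Fac b, lev y = lev g → lev y ≤ 2 →
    ∃ x, x * g * x⁻¹ = y := by
  cases b <;> decide +kernel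

/-- A normal subgroup containing all commutators of `g` contains everything of level at most
`min (lev g) 2`: some commutator has the level of `y`, and within `A₄` or `A₃` elements of equal
level are conjugate in the full symmetric group. -/
lemma mem_of_commutators {b : Bool} (K : Subgroup (Fac b)) [hK : K.Normal] (g y : Fac b)
    (h : ∀ x, g * x * g⁻¹ * x⁻¹ ∈ K) (hy : lev y ≤ lev g) (hy2 : lev y ≤ 2) : y ∈ K := by
  obtain ⟨x, hx⟩ := exists_commutator b g y hy hy2
  obtain ⟨z, rfl⟩ := exists_conj b _ y hx.symm hy2
  exact hK.conj_mem _ (h x) z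

/-! ### Normal subgroups of the product -/

/-- `S₄² × S₃²` as a product over `Bool × Bool`: the first entry of an index tells the type of the
factor and the second distinguishes the two copies. -/
abbrev PG := ∀ p : Bool × Bool, Fac p.1

/-- The lattice of normal subgroups of `S₄² × S₃²`. -/
abbrev NS := NormalSubgroupLattice PG

/-- The elements of level at most `k` of factor `p`. -/
def levelSub (p : Bool × Bool) (k : ℕ) : NS :=
  ⟨{ carrier := {g | (∀ q, q ≠ p → g q = 1) ∧ lev (g p) ≤ k}
     one_mem' := by simp [lev_one]
     mul_mem' := by
      rintro g h ⟨hg, hg'⟩ ⟨hh, hh'⟩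
      refine ⟨fun q hq => by simp [hg q hq, hh q hq], (lev_mul _ _ _).trans (max_le hg' hh')⟩
     inv_mem' := by
      rintro g ⟨hg, hg'⟩
      exact ⟨fun q hq => by simp [hg q hq], by simpa [lev_inv] using hg'⟩ },
   ⟨by
      rintro g ⟨hg, hg'⟩ x
      exact ⟨fun q hq => by simp [hg q hq], by simpa [lev_conj] using hg'⟩⟩⟩

lemma mem_levelSub {p k g} :
    g ∈ (levelSub p k).1 ↔ (∀ q, q ≠ p → g q = 1) ∧ lev (g p) ≤ k := Iff.rfl

/-- The elements supported on `J` whose coordinates in `J` are all even or all odd. -/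
def diagSub (J : Set (Bool × Bool)) : NS :=
  ⟨{ carrier := {g | (∀ q, q ∉ J → g q = 1) ∧
        ∀ p ∈ J, ∀ q ∈ J, Perm.sign (g p) = Perm.sign (g q)}
     one_mem' := by simp
     mul_mem' := by
      rintro g h ⟨hg, hg'⟩ ⟨hh, hh'⟩
      refine ⟨fun q hq => by simp [hg q hq, hh q hq], fun p hp q hq => ?_⟩
      simp [hg' p hp q hq, hh' p hp q hq]
     inv_mem' := by
      rintro g ⟨hg, hg'⟩
      exact ⟨fun q hq => by simp [hg q hq], fun p hp q hq => by simpa using hg' p hp q hq⟩ },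
   ⟨by
      rintro g ⟨hg, hg'⟩ x
      refine ⟨fun q hq => by simp [hg q hq], fun p hp q hq => ?_⟩
      have h : ∀ r, Perm.sign ((x * g * x⁻¹) r) = Perm.sign (g r) := fun r => by
        simp [mul_right_comm _ (Perm.sign (g r))]
      rw [h, h, hg' p hp q hq]⟩⟩

lemma mem_diagSub {J g} : g ∈ (diagSub J).1 ↔ (∀ q, q ∉ J → g q = 1) ∧
    ∀ p ∈ J, ∀ q ∈ J, Perm.sign (g p) = Perm.sign (g q) := Iff.rfl

/-- The elements supported on `J` with all coordinates even. -/
def evenSub (J : Set (Bool × Bool)) : NS :=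
  ⟨{ carrier := {g | (∀ q, q ∉ J → g q = 1) ∧ ∀ p, Perm.sign (g p) = 1}
     one_mem' := by simp
     mul_mem' := by
      rintro g h ⟨hg, hg'⟩ ⟨hh, hh'⟩
      exact ⟨fun q hq => by simp [hg q hq, hh q hq], fun p => by simp [hg' p, hh' p]⟩
     inv_mem' := by
      rintro g ⟨hg, hg'⟩
      exact ⟨fun q hq => by simp [hg q hq], fun p => by simpa using hg' p⟩ },
   ⟨by
      rintro g ⟨hg, hg'⟩ x
      exact ⟨fun q hq => by simp [hg q hq], fun p => by simp [hg' p]⟩⟩⟩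

lemma mem_evenSub {J g} : g ∈ (evenSub J).1 ↔ (∀ q, q ∉ J → g q = 1) ∧
    ∀ p, Perm.sign (g p) = 1 := Iff.rfl

/-- The minimal normal subgroup, `V₄` or `A₃`, of factor `p`. -/
def minSub (p : Bool × Bool) : NS := levelSub p (minLev p.1)

lemma mulSingle_mem (N : NS) {g : PG} (hg : g ∈ N.1) (p) (y : Fac p.1) (hy : lev y ≤ lev (g p))
    (hy2 : lev y ≤ 2) : Pi.mulSingle p y ∈ N.1 := by
  have := N.2
  have : y ∈ N.1.comap (MonoidHom.mulSingle (fun p : Bool × Bool => Fac p.1) p) := by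
    refine mem_of_commutators _ (g p) y (fun x => ?_) hy hy2
    have h1 : (MonoidHom.mulSingle (fun p : Bool × Bool => Fac p.1) p) (g p * x * (g p)⁻¹ * x⁻¹)
        = g * (Pi.mulSingle p x * g⁻¹ * (Pi.mulSingle p x)⁻¹) := by
      funext q
      by_cases hq : q = p
      · subst hq; simp [mul_assoc]
      · simp [hq]
    rw [Subgroup.mem_comap, h1]
    exact N.1.mul_mem hg (N.2.conj_mem _ (N.1.inv_mem hg) _)
  exact this

lemma mem_of_lev_le (N : NS) {g : PG} (hg : g ∈ N.1) (h : PG)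
    (hh : ∀ p, lev (h p) ≤ lev (g p) ∧ lev (h p) ≤ 2) : h ∈ N.1 :=
  Subgroup.pi_mem_of_mulSingle_mem h fun p => mulSingle_mem N hg p _ (hh p).1 (hh p).2

lemma levelSub_le (N : NS) {g : PG} (hg : g ∈ N.1) (p k) (hk : k ≤ lev (g p)) (hk2 : k ≤ 2) :
    levelSub p k ≤ N := by
  intro h hh
  refine mem_of_lev_le N hg h fun q => ?_
  by_cases hq : q = p
  · subst hq; exact ⟨hh.2.trans hk, hh.2.trans hk2⟩
  · simp [hh.1 q hq, lev_one]

lemma sign_eq_neg_one {n : ℕ} {g : Perm (Fin n)} : Perm.sign g = -1 ↔ ¬ lev g ≤ 2 := by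
  rw [lev_le_two]
  rcases Int.units_eq_one_or (Perm.sign g) with h | h <;> simp [h]

lemma diagSub_le (N : NS) {g : PG} (hg : g ∈ N.1) : diagSub {p | Perm.sign (g p) = -1} ≤ N := by
  intro h ⟨h1, h2⟩
  simp only [Set.mem_ofPred_eq] at h1 h2
  by_cases hp : ∃ p, Perm.sign (g p) = -1 ∧ Perm.sign (h p) = -1
  -- An odd element of `diagSub` differs from `g` by an element of even coordinates.
  · obtain ⟨p, hgp, hhp⟩ := hp
    have key : g⁻¹ * h ∈ N.1 := by
      refine mem_of_lev_le N hg _ fun q => ?_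
      by_cases hq : Perm.sign (g q) = -1
      · have h3 : Perm.sign (h q) = -1 := by rw [h2 q hq p hgp, hhp]
        have h4 : lev ((g⁻¹ * h) q) ≤ 2 := by
          rw [lev_le_two]; simp [hq, h3]
        refine ⟨h4.trans ?_, h4⟩
        have := sign_eq_neg_one.1 hq
        omega
      · have h3 : lev ((g⁻¹ * h) q) = lev (g q) := by simp [h1 q hq, lev_inv]
        rw [h3]
        rw [sign_eq_neg_one, not_not] at hq
        exact ⟨le_rfl, hq⟩
    simpa using N.1.mul_mem hg key
  · push Not at hp
    refine mem_of_lev_le N hg _ fun q => ?_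
    by_cases hq : Perm.sign (g q) = -1
    · have h3 := hp q hq
      rw [Ne, sign_eq_neg_one, not_not] at h3
      rw [sign_eq_neg_one] at hq
      exact ⟨by omega, h3⟩
    · simp [h1 q hq, lev_one]

/-- The normal closure of `g` is the join of the subgroups `levelSub p k`, for `k ≤ lev (g p)` and
`k ≤ 2`, and of `diagSub J`, where `J` is the set of odd coordinates of `g`. -/
lemma mem_of_levelSub_of_diagSub (M : NS) (g : PG)
    (h1 : ∀ p k, k ≤ lev (g p) → k ≤ 2 → levelSub p k ≤ M)
    (h2 : diagSub {p | Perm.sign (g p) = -1} ≤ M) : g ∈ M.1 := by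
  classical
  let d : PG := fun p => if Perm.sign (g p) = -1 then g p else 1
  have hd : d ∈ M.1 := h2 ⟨fun q hq => by simpa [d] using fun h => absurd h hq,
    fun p hp q hq => by
      simp only [Set.mem_ofPred_eq] at hp hq
      simp [d, hp, hq]⟩
  have he : d⁻¹ * g ∈ M.1 := by
    refine Subgroup.pi_mem_of_mulSingle_mem _ fun p => ?_
    by_cases hp : Perm.sign (g p) = -1
    · have : (d⁻¹ * g) p = 1 := by simp [d, hp]
      rw [this, Pi.mulSingle_one]; exact M.1.one_mem
    · have h3 : (d⁻¹ * g) p = g p := by simp [d, hp]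
      rw [h3]
      rw [sign_eq_neg_one, not_not] at hp
      exact h1 p (lev (g p)) le_rfl hp
        ⟨fun q hq => by simp [hq], by simp⟩
  simpa using M.1.mul_mem hd he

/-! ### Subgroups with a largest normal subgroup strictly below -/

/-- Among the normal subgroups strictly contained in `N` there is a largest one; equivalently, as
the lattice is finite, `N` is nontrivial and join-irreducible. -/
def HasLowerCover (N : NS) : Prop := ∃ M < N, ∀ K < N, K ≤ M

lemma HasLowerCover.map {N : NS} (h : HasLowerCover N) (φ : LatAut PG) :
    HasLowerCover (φ N) := by
  obtain ⟨M, hM, h⟩ := h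
  refine ⟨φ M, φ.lt_iff_lt.2 hM, fun K hK => ?_⟩
  rw [← φ.symm_apply_le]
  exact h _ (by rwa [φ.symm_apply_lt])

lemma le_evenSub_of_lt {J} {K : NS} (hK : K < diagSub J) : K ≤ evenSub J := by
  intro g hg
  have hg' := hK.le hg
  refine ⟨hg'.1, fun p => ?_⟩
  by_contra hp
  replace hp := (Int.units_eq_one_or _).resolve_left hp
  have hpJ : p ∈ J := by
    by_contra h
    simp [hg'.1 p h] at hp
  have hJ : {p | Perm.sign (g p) = -1} = J := by
    ext q
    constructor
    · intro hq
      by_contra h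
      simp [hg'.1 q h] at hq
    · intro hq
      simp only [Set.mem_ofPred_eq]
      rw [hg'.2 q hq p hpJ, hp]
  exact hK.not_ge (hJ ▸ diagSub_le K hg)

lemma evenSub_lt {J : Set (Bool × Bool)} (hJ : J.Nonempty) : evenSub J < diagSub J := by
  classical
  refine lt_of_le_not_ge (fun g hg => ⟨hg.1, fun p _ q _ => by rw [hg.2, hg.2]⟩) fun h => ?_
  choose s hs using exists_sign
  obtain ⟨p, hp⟩ := hJ
  have : (fun q => if q ∈ J then s q.1 else 1 : PG) ∈ (diagSub J).1 :=
    ⟨fun q hq => by simp [hq], fun p hp q hq => by simp [hp, hq, hs]⟩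
  have := (h this).2 p
  simp [hp, hs] at this

lemma hasLowerCover_diagSub {J : Set (Bool × Bool)} (hJ : J.Nonempty) :
    HasLowerCover (diagSub J) :=
  ⟨evenSub J, evenSub_lt hJ, fun _ => le_evenSub_of_lt⟩

lemma HasLowerCover.eq {N : NS} (h : HasLowerCover N) :
    (∃ p k, N = levelSub p k) ∨ ∃ J, N = diagSub J := by
  obtain ⟨M, hM, h⟩ := h
  by_contra! hne
  refine hM.not_ge fun g hg => mem_of_levelSub_of_diagSub M g (fun p k hk hk2 => ?_) ?_
  · exact h _ (lt_of_le_of_ne (levelSub_le N hg p k hk hk2) (hne.1 p k).symm)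
  · exact h _ (lt_of_le_of_ne (diagSub_le N hg) (hne.2 _).symm)

lemma evenSub_singleton (p) : evenSub {p} = levelSub p 2 := by
  ext g
  rw [mem_evenSub, mem_levelSub, lev_le_two]
  constructor
  · rintro ⟨h1, h2⟩
    exact ⟨h1, h2 p⟩
  · rintro ⟨h1, h2⟩
    refine ⟨h1, fun q => ?_⟩
    by_cases hq : q = p
    · subst hq; exact h2
    · simp [h1 q hq]

/-! ### Minimal normal subgroups and supports -/

lemma minSub_le_iff (N : NS) (p) : minSub p ≤ N ↔ ∃ g ∈ N.1, g p ≠ 1 := by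
  constructor
  · intro h
    obtain ⟨s, hs⟩ := exists_lev p.1
    refine ⟨Pi.mulSingle p s, h ⟨fun q hq => by simp [hq], by simp [hs]⟩, ?_⟩
    rw [Pi.mulSingle_eq_same, Ne, ← lev_eq_zero, hs]
    cases p.1 <;> decide
  · rintro ⟨g, hg, hp⟩
    exact levelSub_le N hg p _ (minLev_le_lev _ _ hp) (minLev_le_two _)

lemma minSub_le_levelSub {p q k} (h : minSub q ≤ levelSub p k) : q = p := by
  obtain ⟨g, hg, hq⟩ := (minSub_le_iff _ _).1 h
  by_contra hne
  exact hq (hg.1 q hne)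

lemma minSub_injective : Function.Injective minSub := fun _ _ h => minSub_le_levelSub h.le

lemma levelSub_two_le_diagSub {p J} (h : p ∈ J) : levelSub p 2 ≤ diagSub J := by
  intro g hg
  rw [← evenSub_singleton] at hg
  refine ⟨fun q hq => hg.1 q ?_, fun p _ q _ => by rw [hg.2, hg.2]⟩
  rintro rfl
  exact hq h

lemma minSub_le_diagSub {q J} : minSub q ≤ diagSub J ↔ q ∈ J := by
  constructor
  · intro h
    obtain ⟨g, hg, hq⟩ := (minSub_le_iff _ _).1 h
    by_contra hne
    exact hq (hg.1 q hne)
  · intro h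
    have h1 : minSub q ≤ levelSub q 2 :=
      fun g hg => ⟨hg.1, hg.2.trans (minLev_le_two _)⟩
    exact h1.trans (levelSub_two_le_diagSub h)

/-- The full factor `p` is the largest normal subgroup with support contained in `{p}`. -/
lemma le_diagSub_singleton {N : NS} {p} : N ≤ diagSub {p} ↔ ∀ q, minSub q ≤ N → q = p := by
  constructor
  · intro h q hq
    exact Set.mem_singleton_iff.1 (minSub_le_diagSub.1 (hq.trans h))
  · intro h g hg
    refine ⟨fun q hq => ?_, by simp⟩
    by_contra hne
    exact hq (h q ((minSub_le_iff _ _).2 ⟨g, hg, hne⟩))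

lemma exists_minSub_le {N K : NS} (h : ¬ N ≤ K) : ∃ q, minSub q ≤ N := by
  by_contra! hN
  refine h fun g hg => ?_
  have : g = 1 := by
    funext q
    by_contra hq
    exact hN q ((minSub_le_iff _ _).2 ⟨g, hg, hq⟩)
  exact this ▸ K.1.one_mem

lemma minSub_not_le (p) : ¬ minSub p ≤ diagSub ∅ := by
  simp [minSub_le_diagSub]

lemma exists_map_minSub (φ : LatAut PG) (p) : ∃ q, φ (minSub p) = minSub q := by
  obtain ⟨q, hq⟩ := exists_minSub_le (N := φ (minSub p)) (K := φ (diagSub ∅))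
    (by rw [φ.le_iff_le]; exact minSub_not_le p)
  obtain ⟨r, hr⟩ := exists_minSub_le (N := φ.symm (minSub q)) (K := φ.symm (diagSub ∅))
    (by rw [φ.symm.le_iff_le]; exact minSub_not_le q)
  have h1 : φ.symm (minSub q) ≤ minSub p := φ.symm_apply_le.2 hq
  have h2 : r = p := minSub_le_levelSub (hr.trans h1)
  subst h2
  exact ⟨q, le_antisymm (φ.le_symm_apply.1 hr) hq⟩

lemma false_of_map_minSub (φ : LatAut PG) {p q : Bool × Bool} (h : φ (minSub p) = minSub q)
    (hp : p.1 = true) (hq : q.1 = false) : False := by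
  have h1 : φ (diagSub {p}) ≤ diagSub {q} := by
    rw [le_diagSub_singleton]
    intro r hr
    obtain ⟨s, hs⟩ := exists_map_minSub φ.symm r
    have h2 : s = p := Set.mem_singleton_iff.1 (minSub_le_diagSub.1 (hs ▸ φ.symm_apply_le.2 hr))
    subst h2
    rw [φ.symm_apply_eq, h] at hs
    exact minSub_injective hs
  have h2 : levelSub p 2 < diagSub {p} := evenSub_singleton p ▸ evenSub_lt ⟨p, rfl⟩
  have h3 := le_evenSub_of_lt ((φ.lt_iff_lt.2 h2).trans_le h1)
  -- Since `S₃` has only three normal subgroups, `A₃` is already minimal.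
  have h4 : evenSub {q} = minSub q := by rw [evenSub_singleton, minSub, hq]; rfl
  rw [h4, ← h, φ.le_iff_le, minSub, hp] at h3
  obtain ⟨s, hs⟩ := exists_lev_two p.1
  have h5 : (Pi.mulSingle p s : PG) ∈ (levelSub p 2).1 :=
    ⟨fun q hq => by simp [hq], by simp [hs]⟩
  have := (h3 h5).2
  rw [Pi.mulSingle_eq_same, hs] at this
  exact absurd this (by decide)

lemma fst_eq_of_map_minSub (φ : LatAut PG) {p q : Bool × Bool} (h : φ (minSub p) = minSub q) :
    q.1 = p.1 := by
  cases hp : p.1 <;> cases hq : q.1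
  · rfl
  · exact (false_of_map_minSub φ.symm (by rw [φ.symm_apply_eq, h]) hq hp).elim
  · exact (false_of_map_minSub φ h hp hq).elim
  · rfl

/-! ### Lattice automorphisms fixing the minimal normal subgroups -/

lemma minSub_le_map_iff {φ : LatAut PG} (hφ : ∀ p, φ (minSub p) = minSub p) (N : NS) (p) :
    minSub p ≤ φ N ↔ minSub p ≤ N := by
  conv_lhs => rw [← hφ p]
  exact φ.le_iff_le

lemma map_symm_minSub {φ : LatAut PG} (hφ : ∀ p, φ (minSub p) = minSub p) (p) :
    φ.symm (minSub p) = minSub p := by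
  rw [φ.symm_apply_eq, hφ]

lemma symm_diagSub_singleton_le {φ : LatAut PG} (hφ : ∀ p, φ (minSub p) = minSub p) (p) :
    φ.symm (diagSub {p}) ≤ diagSub {p} := by
  rw [le_diagSub_singleton]
  intro q hq
  rw [minSub_le_map_iff (map_symm_minSub hφ)] at hq
  exact Set.mem_singleton_iff.1 (minSub_le_diagSub.1 hq)

lemma diagSub_le_map {φ : LatAut PG} (hφ : ∀ p, φ (minSub p) = minSub p) (J) :
    diagSub J ≤ φ (diagSub J) := by
  rcases J.eq_empty_or_nonempty with rfl | hJ
  · by_contra h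
    obtain ⟨q, hq⟩ := exists_minSub_le h
    exact minSub_not_le q hq
  have hs : ∀ q, minSub q ≤ φ (diagSub J) ↔ q ∈ J := fun q => by
    rw [minSub_le_map_iff hφ, minSub_le_diagSub]
  rcases ((hasLowerCover_diagSub hJ).map φ).eq with ⟨p, k, h⟩ | ⟨J', h⟩
  -- The image is supported on one factor, so `J` is a singleton.
  · have h1 : ∀ q ∈ J, q = p := fun q hq => minSub_le_levelSub (h ▸ (hs q).2 hq)
    have h2 : J = {p} := hJ.subset_singleton_iff.1 h1
    subst h2
    exact φ.symm_apply_le.1 (symm_diagSub_singleton_le hφ p)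
  · have h1 : J = J' := by
      ext q; rw [← hs, h, minSub_le_diagSub]
    rw [h, h1]

lemma levelSub_le_map {φ : LatAut PG} (hφ : ∀ p, φ (minSub p) = minSub p) (p) {k : ℕ}
    (hk : k ≤ 2) : levelSub p k ≤ φ (levelSub p k) := by
  have h0 : levelSub p 0 ≤ φ (levelSub p k) := by
    intro g hg
    have : g = 1 := by
      funext q
      by_cases hq : q = p
      · subst hq; exact lev_eq_zero.1 (Nat.le_zero.1 hg.2)
      · exact hg.1 q hq
    rw [this]; exact Subgroup.one_mem _
  interval_cases k
  · exact h0
  · obtain ⟨b, c⟩ := p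
    cases b
    · suffices h : levelSub (false, c) 1 ≤ levelSub (false, c) 0 from h.trans h0
      refine fun g hg => ⟨hg.1, ?_⟩
      have := lev_ne_one (g (false, c))
      have := hg.2
      omega
    · exact (hφ (true, c)).ge
  · rw [← evenSub_singleton, ← φ.symm_apply_le]
    apply le_evenSub_of_lt
    exact (φ.symm.lt_iff_lt.2 (evenSub_lt (Set.singleton_nonempty p))).trans_le
      (symm_diagSub_singleton_le hφ p)

/-- Together with the same inequality for `φ.symm`, this shows that a lattice automorphism fixing
the minimal normal subgroups is the identity. -/
lemma le_apply {φ : LatAut PG} (hφ : ∀ p, φ (minSub p) = minSub p) (N : NS) : N ≤ φ N := by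
  intro g hg
  refine mem_of_levelSub_of_diagSub _ g (fun p k hk hk2 => ?_) ?_
  · exact (levelSub_le_map hφ p hk2).trans (φ.monotone (levelSub_le N hg p k hk hk2))
  · exact (diagSub_le_map hφ _).trans (φ.monotone (diagSub_le N hg))

lemma eq_one_of_map_minSub {φ : LatAut PG} (hφ : ∀ p, φ (minSub p) = minSub p) : φ = 1 := by
  ext1
  funext N
  exact le_antisymm (φ.le_symm_apply.1 (le_apply (map_symm_minSub hφ) N)) (le_apply hφ N)

/-! ### The lattice automorphism group of `S₄² × S₃²` -/

/-- The automorphism of `S₄² × S₃²` permuting the two copies of each factor. -/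
def copyAut : (Bool → Perm Bool) →* MulAut PG where
  toFun π :=
    { toFun := fun g p => g (p.1, (π p.1).symm p.2)
      invFun := fun g p => g (p.1, π p.1 p.2)
      left_inv := fun g => by
        funext ⟨b, c⟩
        exact congrArg (β := Fac b) (fun c => g (b, c)) ((π b).symm_apply_apply c)
      right_inv := fun g => by
        funext ⟨b, c⟩
        exact congrArg (β := Fac b) (fun c => g (b, c)) ((π b).apply_symm_apply c)
      map_mul' := fun _ _ => rfl }
  map_one' := rfl
  map_mul' _ _ := rfl

lemma latHom_copyAut_minSub (π : Bool → Perm Bool) (p : Bool × Bool) :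
    latHom PG (copyAut π) (minSub p) = minSub (p.1, π p.1 p.2) := by
  obtain ⟨q, hq⟩ := exists_map_minSub (latHom PG (copyAut π)) p
  rw [hq]
  obtain ⟨s, hs⟩ := exists_lev p.1
  have h1 : (copyAut π (Pi.mulSingle p s)) ∈ (minSub q).1 := by
    rw [← hq, mem_latHom]
    erw [MulEquiv.symm_apply_apply]
    exact ⟨fun q hq => by simp [hq], by simp [hs]⟩
  have h2 : minSub (p.1, π p.1 p.2) ≤ minSub q := by
    rw [minSub_le_iff]
    refine ⟨_, h1, ?_⟩
    have : copyAut π (Pi.mulSingle p s) (p.1, π p.1 p.2) =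
      (Pi.mulSingle p s : PG) (p.1, (π p.1).symm (π p.1 p.2)) := rfl
    rw [this, Equiv.symm_apply_apply, Ne]
    erw [Pi.mulSingle_eq_same]
    rw [← lev_eq_zero, hs]
    cases p.1 <;> decide
  rw [minSub_le_levelSub h2]

lemma bijective_latHom_copyAut : Function.Bijective ((latHom PG).comp copyAut) := by
  constructor
  · rw [injective_iff_map_eq_one]
    intro π hπ
    funext b
    ext1 c
    have h1 := latHom_copyAut_minSub π (b, c)
    rw [show latHom PG (copyAut π) = 1 from hπ, RelIso.one_apply] at h1
    exact (congrArg Prod.snd (minSub_injective h1)).symm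
  · intro φ
    choose f hf using exists_map_minSub φ
    have hf1 : ∀ p, (f p).1 = p.1 := fun p => fst_eq_of_map_minSub φ (hf p)
    have hinj : ∀ b, Function.Injective fun c => (f (b, c)).2 := by
      intro b c c' h
      have h1 : f (b, c) = f (b, c') := Prod.ext (by rw [hf1, hf1]) h
      have h2 := minSub_injective (φ.injective (by rw [hf, hf, h1] :
        φ (minSub (b, c)) = φ (minSub (b, c'))))
      exact congrArg Prod.snd h2
    let π : Bool → Perm Bool := fun b =>
      Equiv.ofBijective _ (Finite.injective_iff_bijective.1 (hinj b))
    refine ⟨π, ?_⟩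
    rw [MonoidHom.comp_apply, ← inv_mul_eq_one]
    apply eq_one_of_map_minSub
    intro p
    rw [RelIso.mul_apply, hf]
    have h1 : f p = (p.1, π p.1 p.2) := Prod.ext (hf1 p) rfl
    rw [h1, ← latHom_copyAut_minSub]
    exact (latHom PG (copyAut π)).symm_apply_apply _

/-- Regrouping of the four factors. -/
def regroup : (Perm (Fin 4) × Perm (Fin 4) × Perm (Fin 3) × Perm (Fin 3)) ≃* PG where
  toFun g p := match p with
    | (true, true) => g.1
    | (true, false) => g.2.1
    | (false, true) => g.2.2.1
    | (false, false) => g.2.2.2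
  invFun g := (g (true, true), g (true, false), g (false, true), g (false, false))
  left_inv _ := rfl
  right_inv g := by
    funext p
    match p with
    | (true, true) => rfl
    | (true, false) => rfl
    | (false, true) => rfl
    | (false, false) => rfl
  map_mul' g h := by
    funext p
    match p with
    | (true, true) => rfl
    | (true, false) => rfl
    | (false, true) => rfl
    | (false, false) => rfl

/-- The first iterate is `C₂ × C₂`, encoded as the pairs of permutations of a two-element set. -/
noncomputable def firstIterate :
    LatAut (Perm (Fin 4) × Perm (Fin 4) × Perm (Fin 3) × Perm (Fin 3)) ≃* (Bool → Perm Bool) :=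
  (latCongr regroup).trans (MulEquiv.ofBijective _ bijective_latHom_copyAut).symm

/-! ### The second and third iterates -/

instance : IsKleinFour (Bool → Perm Bool) where
  card_four := by rw [Nat.card_eq_fintype_card]; decide
  exponent_two := by
    have h : Monoid.exponent (Bool → Perm Bool) ∣ 2 :=
      Monoid.exponent_dvd_of_forall_pow_eq_one (by decide)
    refine ((Nat.dvd_prime Nat.prime_two).1 h).resolve_left fun h1 => ?_
    have := Monoid.exp_eq_one_iff.1 h1
    have h2 : (1 : Bool → Perm Bool) = fun _ => Equiv.swap true false := Subsingleton.elim _ _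
    revert h2
    decide

section Klein

variable {V : Type*} [Group V] [IsKleinFour V]

open Classical in
/-- Every permutation of the nonidentity elements of a Klein four-group is an automorphism. -/
noncomputable def kleinAut (V : Type*) [Group V] [IsKleinFour V] :
    Perm {a : V // a ≠ 1} →* MulAut V where
  toFun σ := IsKleinFour.mulEquiv' (Perm.ofSubtype σ)
    (Perm.ofSubtype_apply_of_not_mem σ (by simp)) IsKleinFour.exponent_two
  map_one' := by
    ext x; simp [IsKleinFour.mulEquiv']
  map_mul' σ τ := by
    ext x; simp [IsKleinFour.mulEquiv']

lemma kleinAut_apply (σ : Perm {a : V // a ≠ 1}) (a : {a : V // a ≠ 1}) :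
    kleinAut V σ a = σ a := by
  classical
  exact Perm.ofSubtype_apply_coe σ a

/-- The subgroup `{1, a}` of a Klein four-group. -/
def pairSub (a : V) : NormalSubgroupLattice V :=
  ⟨Subgroup.zpowers a, ⟨fun n hn g => by
    have := (IsKleinFour.isMulCommutative (G := V)).is_comm.comm g n
    rwa [this, mul_inv_cancel_right]⟩⟩

lemma pairSub_le {a : V} {N : NormalSubgroupLattice V} : pairSub a ≤ N ↔ a ∈ N.1 :=
  Subgroup.zpowers_le

lemma mem_pairSub {a x : V} : x ∈ (pairSub a).1 ↔ x = 1 ∨ x = a := by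
  constructor
  · rintro ⟨n, rfl⟩
    have h2 : a ^ (2 : ℤ) = 1 := by
      rw [zpow_two, IsKleinFour.mul_self]
    rcases Int.even_or_odd' n with ⟨k, rfl | rfl⟩
    · left; simp [zpow_mul, h2]
    · right; simp [zpow_add, zpow_mul, h2]
  · rintro (rfl | rfl)
    · exact Subgroup.one_mem _
    · exact Subgroup.mem_zpowers _

lemma exists_map_pairSub (φ : LatAut V) (a : {a : V // a ≠ 1}) :
    ∃ b : {a : V // a ≠ 1}, φ (pairSub a.1) = pairSub b.1 := by
  have key : ∀ (ψ : LatAut V) (c : V), c ≠ 1 → ∃ b, b ≠ 1 ∧ b ∈ (ψ (pairSub c)).1 := by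
    intro ψ c hc
    by_contra! h
    have h1 : ψ (pairSub c) ≤ ψ (pairSub 1) := by
      intro x hx
      by_cases hx1 : x = 1
      · rw [hx1]; exact Subgroup.one_mem _
      · exact absurd hx (h x hx1)
    rw [ψ.le_iff_le, pairSub_le, mem_pairSub] at h1
    simp [hc] at h1
  obtain ⟨b, hb, hb'⟩ := key φ a a.2
  obtain ⟨c, hc, hc'⟩ := key φ.symm b hb
  rw [← pairSub_le] at hb' hc'
  have h1 : pairSub c ≤ pairSub a.1 := hc'.trans (φ.symm_apply_le.2 hb')
  have h2 : c = a := (mem_pairSub.1 (pairSub_le.1 h1)).resolve_left hc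
  subst h2
  exact ⟨⟨b, hb⟩, le_antisymm (φ.le_symm_apply.1 hc') hb'⟩

lemma pairSub_injective {a b : {a : V // a ≠ 1}} (h : pairSub a.1 = pairSub b.1) : a = b :=
  Subtype.ext ((mem_pairSub.1 (pairSub_le.1 h.le)).resolve_left a.2)

lemma bijective_latHom_kleinAut : Function.Bijective ((latHom V).comp (kleinAut V)) := by
  have : Finite V := IsKleinFour.instFinite
  constructor
  · rw [injective_iff_map_eq_one]
    intro σ hσ
    ext1 a
    have h1 : (σ a : V) ∈ (latHom V (kleinAut V σ) (pairSub a.1)).1 := by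
      rw [mem_latHom, ← kleinAut_apply]
      erw [MulEquiv.symm_apply_apply]
      exact mem_pairSub.2 (Or.inr rfl)
    rw [show latHom V (kleinAut V σ) = 1 from hσ, RelIso.one_apply] at h1
    exact Subtype.ext ((mem_pairSub.1 h1).resolve_left (σ a).2)
  · intro φ
    choose f hf using exists_map_pairSub φ
    have hinj : Function.Injective f := by
      intro a b h
      exact pairSub_injective (φ.injective (by rw [hf, hf, h]))
    let σ := Equiv.ofBijective f (Finite.injective_iff_bijective.1 hinj)
    refine ⟨σ, ?_⟩
    ext N y
    rw [MonoidHom.comp_apply, mem_latHom]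
    by_cases hy : y = 1
    · rw [hy, map_one]
      exact iff_of_true (Subgroup.one_mem _) (Subgroup.one_mem _)
    · obtain ⟨a, ha⟩ := σ.surjective ⟨y, hy⟩
      have h1 : y = kleinAut V σ a := by rw [kleinAut_apply, ha]
      have h2 : (kleinAut V σ).symm y = a := by rw [h1]; exact MulEquiv.symm_apply_apply _ _
      have h3 : (f a : V) = y := congrArg Subtype.val ha
      rw [h2, ← pairSub_le, ← φ.le_iff_le, hf, pairSub_le, h3]

/-- The lattice automorphisms of a Klein four-group are the permutations of its nonidentity
elements. -/
noncomputable def latAutKlein (V : Type*) [Group V] [IsKleinFour V] :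
    Perm {a : V // a ≠ 1} ≃* LatAut V :=
  MulEquiv.ofBijective _ bijective_latHom_kleinAut

end Klein

lemma card_ne_one : Fintype.card {a : Bool → Perm Bool // a ≠ 1} = 3 := by decide

/-- The second iterate. -/
noncomputable def secondIterate :
    LatAut (LatAut (Perm (Fin 4) × Perm (Fin 4) × Perm (Fin 3) × Perm (Fin 3))) ≃*
      Perm (Fin 3) :=
  ((latCongr firstIterate).trans (latAutKlein _).symm).trans
    (Fintype.equivFinOfCardEq card_ne_one).permCongrHom

lemma le_total_normal (N M : NormalSubgroupLattice (Perm (Fin 3))) : N ≤ M ∨ M ≤ N := by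
  have key : ∀ g y : Perm (Fin 3), ∃ x z, (y = x * g * x⁻¹ ∨ y = x * g * x⁻¹ * (z * g * z⁻¹)) ∨
      (g = x * y * x⁻¹ ∨ g = x * y * x⁻¹ * (z * y * z⁻¹)) := by decide +kernel
  by_contra! h
  obtain ⟨g, hgN, hgM⟩ := SetLike.not_le_iff_exists.1 (show ¬ N.1 ≤ M.1 from h.1)
  obtain ⟨y, hyM, hyN⟩ := SetLike.not_le_iff_exists.1 (show ¬ M.1 ≤ N.1 from h.2)
  obtain ⟨x, z, (h | h) | (h | h)⟩ := key g y
  · exact hyN (h ▸ N.2.conj_mem _ hgN _)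
  · exact hyN (h ▸ N.1.mul_mem (N.2.conj_mem _ hgN _) (N.2.conj_mem _ hgN _))
  · exact hgM (h ▸ M.2.conj_mem _ hyM _)
  · exact hgM (h ▸ M.1.mul_mem (M.2.conj_mem _ hyM _) (M.2.conj_mem _ hyM _))

instance : Subsingleton (LatAut (Perm (Fin 3))) := by
  classical
  let _ : LinearOrder (NormalSubgroupLattice (Perm (Fin 3))) :=
    { (inferInstance : PartialOrder (NormalSubgroupLattice (Perm (Fin 3)))) with
      le_total := le_total_normal
      toDecidableLE := Classical.decRel _ }
  exact OrderIso.subsingleton_of_wellFoundedLT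

end LatAutTower

/-- **Sharpness of the termination bound.** For `G₀ = S₄² × S₃²`, the second
iterate `LatAut(LatAut(G₀))` is isomorphic to `S₃` (in particular nontrivial),
while the third iterate `LatAut(LatAut(LatAut(G₀)))` is trivial: the LatAut
tower of `G₀` terminates in exactly three steps. -/
theorem latAut_tower_sharpness :
    Nonempty
      (LatAut (LatAut (Equiv.Perm (Fin 4) × Equiv.Perm (Fin 4) ×
          Equiv.Perm (Fin 3) × Equiv.Perm (Fin 3))) ≃* Equiv.Perm (Fin 3)) ∧
    Subsingleton
      (LatAut (LatAut (LatAut (Equiv.Perm (Fin 4) × Equiv.Perm (Fin 4) ×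
          Equiv.Perm (Fin 3) × Equiv.Perm (Fin 3))))) := by
  exact ⟨⟨LatAutTower.secondIterate⟩,
    (LatAutTower.latCongr LatAutTower.secondIterate).toEquiv.subsingleton⟩
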